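/- arXiv:math/0408391 — 3 statements merged into one kernel-verified Lean document; each statement's English description precedes it below -/
import Mathlib

section
/- Let n ≥ 1, let α : Fin n → ℂ satisfy 0 < ‖α i‖ < 1 for every i, fix a real constant C > 1, set β i := Real.log C / (− Real.log ‖α i‖), and define φ : (Fin n → ℂ) → ℝ by φ t = ∑ i, ‖t i‖ ^ (β i). Then for every t : Fin n → ℂ with t ≠ 0 there exists a unique integer k ∈ ℤ such that 1 ≤ φ (fun i => (α i)^k * t i) < C. Equivalently, ℂⁿ \ {0} is the disjoint union over k ∈ ℤ of the sets A^k(D), where D = { x : 1 ≤ φ(x) < C } is a fundamental domain for the cyclic group ⟨A⟩ generated by the diagonal contraction A = diag(α 1, …, α n). -/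
/-!
The exponents are chosen so that `‖α i‖ ^ β i = C⁻¹`, which makes every summand of the potential,
hence the potential itself, scale by `C⁻¹` under the contraction `A`. The orbit of `t` under `A` is
thus sent to the geometric progression `φ t / C ^ k`, and exactly one term of such a progression
lies in `[1, C)`.
-/

theorem existsUnique_div_zpow_mem_Ico_of_pos {K : Type*} [Semifield K] [LinearOrder K]
    [IsStrictOrderedRing K] [Archimedean K] [ExistsAddOfLE K] {a b c : K} (ha : 1 < a)
    (hb : 0 < b) (hc : 0 < c) : ∃! k : ℤ, b / a ^ k ∈ Set.Ico c (c * a) := by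
  have ha₀ : 0 < a := zero_lt_one.trans ha
  have mem_iff (k : ℤ) :
      b / a ^ k ∈ Set.Ico c (c * a) ↔ b / c ∈ Set.Ico (a ^ k) (a ^ (k + 1)) := by
    have upper_end : c * a * a ^ k = a ^ (k + 1) * c := by
      rw [zpow_add_one₀ ha₀.ne']
      ring
    rw [Set.mem_Ico, Set.mem_Ico, le_div_iff₀ (zpow_pos ha₀ k), div_lt_iff₀ (zpow_pos ha₀ k),
      le_div_iff₀ hc, div_lt_iff₀ hc, upper_end, mul_comm c]
  rw [existsUnique_congr mem_iff]
  refine existsUnique_of_exists_of_unique (exists_mem_Ico_zpow (div_pos hb hc) ha) ?_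
  intro k m hk hm
  have hkm : k < m + 1 := (zpow_lt_zpow_iff_right₀ ha).1 (hk.1.trans_lt hm.2)
  have hmk : m < k + 1 := (zpow_lt_zpow_iff_right₀ ha).1 (hm.1.trans_lt hk.2)
  lia

theorem rpow_log_div_neg_log {a c : ℝ} (ha₀ : 0 < a) (ha₁ : a ≠ 1) (hc : 0 < c) :
    a ^ (Real.log c / -Real.log a) = c⁻¹ := by
  rw [div_neg, Real.log_div_log, Real.rpow_neg ha₀.le, Real.rpow_logb ha₀ ha₁ hc]

theorem norm_zpow_smul_rpow {𝕜 E : Type*} [NormedDivisionRing 𝕜] [SeminormedAddCommGroup E]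
    [Module 𝕜 E] [NormSMulClass 𝕜 E] (a : 𝕜) (x : E) (b : ℝ) (k : ℤ) :
    ‖a ^ k • x‖ ^ b = (‖a‖ ^ b) ^ k * ‖x‖ ^ b := by
  rw [norm_smul, Real.mul_rpow (norm_nonneg _) (norm_nonneg _), norm_zpow,
    Real.rpow_zpow_comm (norm_nonneg a)]

/-- The Kähler potential `φ t = ∑ i, ‖t i‖ ^ β i` of the Hopf manifold construction, on a finite
product of normed spaces; `ℂⁿ` is the case where every factor is `ℂ`. -/
noncomputable def hopfPotential {ι : Type*} [Fintype ι] {E : ι → Type*} [∀ i, Norm (E i)]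
    (β : ι → ℝ) (t : ∀ i, E i) : ℝ :=
  ∑ i, ‖t i‖ ^ β i

section HopfPotential

variable {ι : Type*} [Fintype ι] {E : ι → Type*}

theorem hopfPotential_pos [∀ i, NormedAddGroup (E i)] (β : ι → ℝ) {t : ∀ i, E i} (ht : t ≠ 0) :
    0 < hopfPotential β t := by
  obtain ⟨i, hi⟩ := Function.ne_iff.1 ht
  exact Finset.sum_pos' (fun j _ ↦ Real.rpow_nonneg (norm_nonneg (t j)) (β j))
    ⟨i, Finset.mem_univ i, Real.rpow_pos_of_pos (norm_pos_iff.2 hi) (β i)⟩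

variable {𝕜 : Type*} [NormedDivisionRing 𝕜]

theorem hopfPotential_zpow_smul [∀ i, SeminormedAddCommGroup (E i)] [∀ i, Module 𝕜 (E i)]
    [∀ i, NormSMulClass 𝕜 (E i)] {α : ι → 𝕜} {β : ι → ℝ} {c : ℝ}
    (h : ∀ i, ‖α i‖ ^ β i = c) (k : ℤ) (t : ∀ i, E i) :
    hopfPotential β (fun i ↦ α i ^ k • t i) = c ^ k * hopfPotential β t := by
  simp only [hopfPotential, norm_zpow_smul_rpow, h, Finset.mul_sum]

theorem hopf_fundamental_domain_general [∀ i, NormedAddCommGroup (E i)] [∀ i, Module 𝕜 (E i)]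
    [∀ i, NormSMulClass 𝕜 (E i)] {α : ι → 𝕜} (hα : ∀ i, 0 < ‖α i‖ ∧ ‖α i‖ < 1)
    {C : ℝ} (hC : 1 < C) {β : ι → ℝ} (hβ : ∀ i, β i = Real.log C / -Real.log ‖α i‖)
    {t : ∀ i, E i} (ht : t ≠ 0) :
    ∃! k : ℤ, hopfPotential β (fun i ↦ α i ^ k • t i) ∈ Set.Ico 1 C := by
  have norm_rpow (i : ι) : ‖α i‖ ^ β i = C⁻¹ := by
    rw [hβ, rpow_log_div_neg_log (hα i).1 (hα i).2.ne (zero_lt_one.trans hC)]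
  have potential_eq (k : ℤ) :
      hopfPotential β (fun i ↦ α i ^ k • t i) = hopfPotential β t / C ^ k := by
    rw [hopfPotential_zpow_smul norm_rpow, inv_zpow, inv_mul_eq_div]
  simpa only [potential_eq, one_mul] using
    existsUnique_div_zpow_mem_Ico_of_pos hC (hopfPotential_pos β ht) one_pos

end HopfPotential

/-- `D = {x | 1 ≤ φ x < C}` is a fundamental domain for the cyclic group
generated by the diagonal contraction `A = diag(α 1, …, α n)` acting on
`ℂⁿ \ 0`: every nonzero `t` lands in `D` under a unique integer power of `A`. -/
theorem hopf_fundamental_domain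
    (n : ℕ) (hn : 1 ≤ n) (α : Fin n → ℂ)
    (hα : ∀ i, 0 < ‖α i‖ ∧ ‖α i‖ < 1)
    (C : ℝ) (hC : 1 < C)
    (β : Fin n → ℝ) (hβ : ∀ i, β i = Real.log C / (- Real.log ‖α i‖))
    (φ : (Fin n → ℂ) → ℝ) (hφ : ∀ t, φ t = ∑ i, ‖t i‖ ^ (β i)) :
    ∀ t : Fin n → ℂ, t ≠ 0 →
      ∃! k : ℤ, 1 ≤ φ (fun i => (α i) ^ k * t i) ∧ φ (fun i => (α i) ^ k * t i) < C := by
  obtain rfl : φ = hopfPotential β := funext hφ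
  exact fun t ht ↦ hopf_fundamental_domain_general hα hC hβ ht
end

section
/- Let n ≥ 1 and let α : Fin n → ℂ satisfy 0 < ‖α i‖ < 1 for every i. Consider the ℤ-action on the subspace X = { t : Fin n → ℂ | t ≠ 0 } of ℂⁿ given by k • t = fun i => (α i)^k * t i. Then the orbit space X/ℤ, equipped with the quotient topology, is a compact Hausdorff topological space. -/
/-!
A unit `u` with `‖u‖ < 1`, acting on the nonzero vectors of a normed module, raises the height
`ψ x = -log ‖x‖` by at least some `ε > 0` and by at most some `C`, so along every orbit
`k ↦ ψ (uᵏ x)` increases with steps between `ε` and `C`.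

Hausdorff: if `uᵏ` moves a point of a compact set `K` into a compact set `L`, then `|k| ε` is
bounded by the oscillation of `ψ` on `K ∪ L`, so the action is properly discontinuous.

Compactness: steps of size at most `C` cannot jump over the shell `{0 ≤ ψ ≤ C}`, so this compact set
meets every orbit.

For the diagonal contraction, `u = α` is a unit of the ring `ℂⁿ` acting on itself; it has sup norm
less than `1` as all `‖α i‖ < 1`.
-/

namespace HopfQuotient

open Set MulAction Subgroup

section IntSequence

variable {s : ℤ → ℝ} {ε C : ℝ}

lemma add_sub_mul_le_of_forall_add_le_succ (hs : ∀ k, s k + ε ≤ s (k + 1)) {k l : ℤ}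
    (hkl : k ≤ l) : s k + (l - k) * ε ≤ s l := by
  have hmono : Monotone fun k : ℤ => s k - k * ε :=
    monotone_int_of_le_succ fun k => by push_cast; linarith [hs k]
  linarith [hmono hkl]

lemma abs_mul_le_abs_sub_zero (hs : ∀ k, s k + ε ≤ s (k + 1)) (k : ℤ) :
    |(k : ℝ)| * ε ≤ |s k - s 0| := by
  rcases le_total 0 k with hk | hk
  · have hle := add_sub_mul_le_of_forall_add_le_succ hs hk
    rw [abs_of_nonneg (by exact_mod_cast hk)]
    push_cast at hle
    linarith [le_abs_self (s k - s 0)]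
  · have hle := add_sub_mul_le_of_forall_add_le_succ hs hk
    rw [abs_of_nonpos (by exact_mod_cast hk)]
    push_cast at hle
    linarith [neg_le_abs (s k - s 0)]

lemma exists_mem_Ico_of_forall_succ_le_add (hε : 0 < ε) (hs : ∀ k, s k + ε ≤ s (k + 1))
    (hsC : ∀ k, s (k + 1) ≤ s k + C) : ∃ k, s k ∈ Ico 0 C := by
  obtain ⟨N, hN⟩ := exists_nat_ge (|s 0| / ε)
  rw [div_le_iff₀ hε] at hN
  have hbdd : ∀ k : ℤ, 0 ≤ s k → -(N : ℤ) ≤ k := by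
    intro k hk
    by_contra! hlt
    have hle := add_sub_mul_le_of_forall_add_le_succ hs (show k ≤ 0 by omega)
    have hmul : (k : ℝ) * ε < -N * ε := mul_lt_mul_of_pos_right (by exact_mod_cast hlt) hε
    push_cast at hle
    linarith [le_abs_self (s 0)]
  have hnonneg : 0 ≤ s N := by
    have hle := add_sub_mul_le_of_forall_add_le_succ hs (show (0 : ℤ) ≤ N by omega)
    push_cast at hle
    linarith [neg_abs_le (s 0)]
  obtain ⟨k, hk, hleast⟩ := Int.exists_least_of_bdd ⟨_, hbdd⟩ ⟨N, hnonneg⟩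
  have hpred : s (k - 1) < 0 := by
    by_contra! h
    linarith [hleast _ h]
  have hstep := hsC (k - 1)
  rw [sub_add_cancel] at hstep
  exact ⟨k, hk, by linarith⟩

end IntSequence

section Action

variable {G X : Type*} [Group G] [MulAction G X]

lemma orbitRel_zpowers_iff {g : G} {x y : X} :
    orbitRel (zpowers g) X x y ↔ ∃ k : ℤ, g ^ k • x = y := by
  rw [orbitRel_apply, mem_orbit_symm, mem_orbit_iff]
  exact exists_zpowers

lemma zpow_add_one_smul (g : G) (k : ℤ) (x : X) : g ^ (k + 1) • x = g • g ^ k • x := by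
  rw [add_comm, zpow_one_add, mul_smul]

variable [TopologicalSpace X]

lemma compactSpace_orbitRel_quotient {K : Set X} (hK : IsCompact K)
    (hmeets : ∀ x, ∃ g : G, g • x ∈ K) : CompactSpace (orbitRel.Quotient G X) where
  isCompact_univ := by
    have himage : Quotient.mk (orbitRel G X) '' K = univ := by
      refine eq_univ_of_forall (Quotient.ind fun x => ?_)
      obtain ⟨g, hg⟩ := hmeets x
      exact ⟨g • x, hg, Quotient.sound (mem_orbit x g)⟩
    exact himage ▸ hK.image continuous_quot_mk

variable {g : G} {ψ : X → ℝ} {ε C : ℝ}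

theorem properlyDiscontinuousSMul_zpowers (hψ : Continuous ψ) (hε : 0 < ε)
    (hlow : ∀ x, ψ x + ε ≤ ψ (g • x)) : ProperlyDiscontinuousSMul (zpowers g) X where
  finite_disjoint_inter_image {K L} hK hL := by
    obtain ⟨B, hB⟩ := (hK.union hL).exists_bound_of_continuousOn hψ.continuousOn
    have hfinite : (Metric.closedBall (0 : ℤ) (2 * B / ε)).Finite :=
      (isCompact_closedBall _ _).finite_of_discrete
    refine (hfinite.image fun k => (⟨g ^ k, k, rfl⟩ : zpowers g)).subset ?_
    rintro ⟨_, k, rfl⟩ ⟨_, ⟨x, hx, rfl⟩, hy : g ^ k • x ∈ L⟩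
    refine ⟨k, ?_, rfl⟩
    have hstep (k : ℤ) : ψ (g ^ k • x) + ε ≤ ψ (g ^ (k + 1) • x) :=
      zpow_add_one_smul g k x ▸ hlow _
    have hk : |(k : ℝ)| * ε ≤ |ψ (g ^ k • x) - ψ x| := by
      simpa only [zpow_zero, one_smul] using abs_mul_le_abs_sub_zero hstep k
    rw [mem_closedBall_zero_iff, Int.norm_eq_abs, le_div_iff₀ hε]
    calc |(k : ℝ)| * ε ≤ |ψ (g ^ k • x) - ψ x| := hk
      _ ≤ |ψ (g ^ k • x)| + |ψ x| := abs_sub _ _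
      _ ≤ B + B := add_le_add (hB _ (.inr hy)) (hB _ (.inl hx))
      _ = 2 * B := (two_mul B).symm

theorem compactSpace_orbitRel_quotient_zpowers (hε : 0 < ε)
    (hlow : ∀ x, ψ x + ε ≤ ψ (g • x)) (hupp : ∀ x, ψ (g • x) ≤ ψ x + C)
    (hshell : IsCompact (ψ ⁻¹' Icc 0 C)) : CompactSpace (orbitRel.Quotient (zpowers g) X) := by
  refine compactSpace_orbitRel_quotient hshell fun x => ?_
  obtain ⟨k, hk⟩ := exists_mem_Ico_of_forall_succ_le_add (s := fun k => ψ (g ^ k • x)) hε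
    (fun k => zpow_add_one_smul g k x ▸ hlow _) (fun k => zpow_add_one_smul g k x ▸ hupp _)
  exact ⟨⟨g ^ k, k, rfl⟩, Ico_subset_Icc_self hk⟩

end Action

section Height

variable {M : Type*} [NormedAddCommGroup M]

/-- The height `-log ‖x‖` of a nonzero vector, which stands in for `-log φ`, where
`φ(t) = ∑ |t_i| ^ β_i` is the usual potential on `ℂⁿ \ 0`. The sign makes contractions
increase it. -/
noncomputable def height (x : {x : M // x ≠ 0}) : ℝ := -Real.log ‖x.1‖

lemma continuous_height : Continuous (height (M := M)) :=
  ((continuous_norm.comp continuous_subtype_val).log fun x => norm_ne_zero_iff.2 x.2).neg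

lemma isCompact_height_preimage_Icc [ProperSpace M] (a b : ℝ) :
    IsCompact (height (M := M) ⁻¹' Icc a b) := by
  have himage : Subtype.val '' (height (M := M) ⁻¹' Icc a b) =
      Metric.closedBall 0 (Real.exp (-a)) ∩ {x | Real.exp (-b) ≤ ‖x‖} := by
    ext x
    constructor
    · rintro ⟨x, ⟨ha, hb⟩, rfl⟩
      have hx : 0 < ‖x.1‖ := norm_pos_iff.2 x.2
      exact ⟨mem_closedBall_zero_iff.2 ((Real.log_le_iff_le_exp hx).1 (le_neg.1 ha)),
        (Real.le_log_iff_exp_le hx).1 (neg_le.1 hb)⟩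
    · rintro ⟨hxa, hxb⟩
      have hx : 0 < ‖x‖ := (Real.exp_pos _).trans_le hxb
      exact ⟨⟨x, norm_pos_iff.1 hx⟩,
        ⟨le_neg.2 ((Real.log_le_iff_le_exp hx).2 (mem_closedBall_zero_iff.1 hxa)),
          neg_le.2 ((Real.le_log_iff_exp_le hx).2 hxb)⟩, rfl⟩
  rw [Subtype.isCompact_iff, himage]
  exact (isCompact_closedBall _ _).inter_right (isClosed_le continuous_const continuous_norm)

variable {R : Type*} [SeminormedRing R] [Module R M] [IsBoundedSMul R M] {u : Rˣ}

lemma height_sub_log_le_height_smul {c : ℝ} (hu : ‖(u : R)‖ ≤ c) (x : {x : M // x ≠ 0}) :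
    height x - Real.log c ≤ height (u • x) := by
  have hx : 0 < ‖x.1‖ := norm_pos_iff.2 x.2
  have hux : 0 < ‖(u • x).1‖ := norm_pos_iff.2 (u • x).2
  have hle : ‖(u • x).1‖ ≤ c * ‖x.1‖ :=
    (norm_smul_le (u : R) x.1).trans (mul_le_mul_of_nonneg_right hu hx.le)
  have hc : 0 < c := pos_of_mul_pos_left (hux.trans_le hle) hx.le
  have hlog := Real.log_le_log hux hle
  rw [Real.log_mul hc.ne' hx.ne'] at hlog
  simp only [height]
  linarith

lemma height_smul_le_add_log (x : {x : M // x ≠ 0}) :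
    height (u • x) ≤ height x + Real.log ‖((u⁻¹ : Rˣ) : R)‖ := by
  have hinv := height_sub_log_le_height_smul (u := u⁻¹) le_rfl (u • x)
  rw [inv_smul_smul] at hinv
  linarith

lemma exists_pos_height_add_le_height_smul (hu : ‖(u : R)‖ < 1) :
    ∃ ε > 0, ∀ x : {x : M // x ≠ 0}, height x + ε ≤ height (u • x) := by
  obtain ⟨c, huc, hc⟩ := exists_between hu
  exact ⟨-Real.log c, neg_pos.2 (Real.log_neg ((norm_nonneg _).trans_lt huc) hc),
    height_sub_log_le_height_smul huc.le⟩

lemma continuousConstSMul_subgroup_units_ne_zero (H : Subgroup Rˣ) :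
    ContinuousConstSMul H {x : M // x ≠ 0} where
  continuous_const_smul u :=
    ((continuous_const_smul ((u : Rˣ) : R)).comp continuous_subtype_val).subtype_mk _

theorem t2Space_orbitRel_quotient_zpowers_of_norm_lt_one [LocallyCompactSpace M]
    (hu : ‖(u : R)‖ < 1) : T2Space (orbitRel.Quotient (zpowers u) {x : M // x ≠ 0}) := by
  obtain ⟨ε, hε, hlow⟩ := exists_pos_height_add_le_height_smul (M := M) hu
  have : LocallyCompactSpace {x : M // x ≠ 0} := isOpen_ne.locallyCompactSpace
  have := continuousConstSMul_subgroup_units_ne_zero (M := M) (zpowers u)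
  have := properlyDiscontinuousSMul_zpowers continuous_height hε hlow
  exact t2Space_of_properlyDiscontinuousSMul_of_t2Space

theorem compactSpace_orbitRel_quotient_zpowers_of_norm_lt_one [ProperSpace M]
    (hu : ‖(u : R)‖ < 1) : CompactSpace (orbitRel.Quotient (zpowers u) {x : M // x ≠ 0}) := by
  obtain ⟨ε, hε, hlow⟩ := exists_pos_height_add_le_height_smul (M := M) hu
  exact compactSpace_orbitRel_quotient_zpowers hε hlow height_smul_le_add_log
    (isCompact_height_preimage_Icc _ _)

end Height

end HopfQuotient

open HopfQuotient MulAction Subgroup in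
theorem hopf_quotient_compact_t2_general {ι 𝕜 : Type*} [Finite ι] [NormedDivisionRing 𝕜]
    [ProperSpace 𝕜] (α : ι → 𝕜) (hα : ∀ i, 0 < ‖α i‖ ∧ ‖α i‖ < 1) :
    CompactSpace (Quot (fun x y : {t : ι → 𝕜 // t ≠ 0} =>
        ∃ k : ℤ, (fun i => (α i) ^ k * x.1 i) = y.1)) ∧
    T2Space (Quot (fun x y : {t : ι → 𝕜 // t ≠ 0} =>
        ∃ k : ℤ, (fun i => (α i) ^ k * x.1 i) = y.1)) := by
  cases nonempty_fintype ι
  obtain ⟨u, rfl⟩ : IsUnit α := Pi.isUnit_iff.2 fun i => (norm_pos_iff.1 (hα i).1).isUnit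
  have hu : ‖(u : ι → 𝕜)‖ < 1 := (pi_norm_lt_iff one_pos).2 fun i => (hα i).2
  have hrel : (fun x y : {t : ι → 𝕜 // t ≠ 0} =>
      ∃ k : ℤ, (fun i => (u : ι → 𝕜) i ^ k * x.1 i) = y.1) = orbitRel (zpowers u) _ := by
    ext x y
    simp only [orbitRel_zpowers_iff, Subtype.ext_iff, Units.smul_coe, Units.smul_def,
      Units.val_zpow_eq_zpow_val]
    rfl
  rw [hrel]
  exact ⟨compactSpace_orbitRel_quotient_zpowers_of_norm_lt_one hu,
    t2Space_orbitRel_quotient_zpowers_of_norm_lt_one hu⟩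

/-- The quotient of `ℂⁿ \ 0` by the cyclic group generated by the diagonal
contraction `A = diag(α 1, …, α n)` (the underlying topological space of the
diagonal Hopf manifold) is a compact Hausdorff space. -/
theorem hopf_quotient_compact_t2
    (n : ℕ) (hn : 1 ≤ n) (α : Fin n → ℂ)
    (hα : ∀ i, 0 < ‖α i‖ ∧ ‖α i‖ < 1) :
    CompactSpace (Quot (fun x y : {t : Fin n → ℂ // t ≠ 0} =>
        ∃ k : ℤ, (fun i => (α i) ^ k * x.1 i) = y.1)) ∧
    T2Space (Quot (fun x y : {t : Fin n → ℂ // t ≠ 0} =>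
        ∃ k : ℤ, (fun i => (α i) ^ k * x.1 i) = y.1)) :=
  hopf_quotient_compact_t2_general α hα
end

section
/- Let n ≥ 1 and let α : Fin n → ℂ satisfy 0 < ‖α i‖ < 1 for every i. Consider the ℤ-action on the subspace X = { t : Fin n → ℂ | t ≠ 0 } of ℂⁿ given by k • t = fun i => (α i)^k * t i. Then the orbit space X/ℤ (with the quotient topology) is homeomorphic to the product S^{2n−1} × S¹, where S^{2n−1} is the unit sphere { x ∈ ℂⁿ : ‖x‖ = 1 } (Euclidean norm on ℂⁿ ≅ ℝ^{2n}) and S¹ is the circle ℝ/ℤ. -/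
/-!
The `ℤ`-action generated by `diag α` consists of the integer times of the real flow
`φ_s(t)ᵢ = exp(s log αᵢ) tᵢ`, along which the norm decays exponentially. So every trajectory of
nonzero vectors crosses the unit sphere exactly once, at a time `τ(t)` which depends continuously
on `t` because `τ(t) < a ↔ ‖φ_a(t)‖ < 1` and `a < τ(t) ↔ 1 < ‖φ_a(t)‖`. Hence
`t ↦ (φ_{τ(t)}(t), τ(t))` is a homeomorphism `ℂⁿ \ 0 ≃ S^{2n-1} × ℝ`, and since
`τ(φ_s(t)) = τ(t) - s`, it turns the `ℤ`-action into translation of the second factor by integers.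
-/

open Filter Topology Set WithLp
open scoped ENNReal

noncomputable section

lemma nonempty_quot_homeomorph_of_isQuotientMap {X Y : Type*} [TopologicalSpace X]
    [TopologicalSpace Y] {g : X → Y} (hg : IsQuotientMap g) {r : X → X → Prop}
    (hr : ∀ x y, g x = g y ↔ r x y) : Nonempty (Quot r ≃ₜ Y) := by
  obtain rfl : (fun x y => g x = g y) = r := by
    ext x y
    exact hr x y
  exact ⟨IsQuotientMap.homeomorph (f := ⟨g, hg.continuous⟩) hg⟩

section CrossSection

variable {X T R : Type*} [TopologicalSpace X]
  [TopologicalSpace T] [AddCommGroup T] [LinearOrder T] [TopologicalSpace R] [LinearOrder R]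

/-- The level set `f ⁻¹' {c}` is a global cross-section of the flow `φ`: along every trajectory the
height `f` strictly decreases and attains the value `c`. -/
structure IsTransverseLevel (φ : Flow T X) (f : X → R) (c : R) : Prop where
  continuous : Continuous f
  strictAnti (x : X) : StrictAnti fun s => f (φ s x)
  exists_eq (x : X) : ∃ s, f (φ s x) = c

namespace IsTransverseLevel

variable {φ : Flow T X} {f : X → R} {c : R} (h : IsTransverseLevel φ f c)

/-- The time at which the trajectory of `x` crosses the level `c` of `f`. -/
def crossingTime (x : X) : T :=
  (h.exists_eq x).choose

lemma map_crossingTime (x : X) : f (φ (h.crossingTime x) x) = c :=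
  (h.exists_eq x).choose_spec

lemma crossingTime_eq_iff {x : X} {s : T} : h.crossingTime x = s ↔ f (φ s x) = c := by
  rw [← (h.strictAnti x).injective.eq_iff, h.map_crossingTime, eq_comm]

lemma crossingTime_lt_iff {x : X} {s : T} : h.crossingTime x < s ↔ f (φ s x) < c := by
  rw [← (h.strictAnti x).lt_iff_gt, h.map_crossingTime]

lemma lt_crossingTime_iff {x : X} {s : T} : s < h.crossingTime x ↔ c < f (φ s x) := by
  rw [← (h.strictAnti x).lt_iff_gt, h.map_crossingTime]

lemma crossingTime_flow (s : T) (x : X) : h.crossingTime (φ s x) = h.crossingTime x - s := by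
  rw [crossingTime_eq_iff, ← φ.map_add, sub_add_cancel, h.map_crossingTime]

lemma continuous_crossingTime [OrderTopology T] [OrderClosedTopology R] :
    Continuous h.crossingTime := by
  have hφ (s : T) : Continuous fun x => f (φ s x) := h.continuous.comp (φ.continuous_toFun s)
  refine continuous_iff_lower_upperSemicontinuous.2 ⟨?_, ?_⟩
  · refine lowerSemicontinuous_iff_isOpen_preimage.2 fun s => ?_
    simpa only [preimage, mem_Ioi, h.lt_crossingTime_iff] using isOpen_lt continuous_const (hφ s)
  · refine upperSemicontinuous_iff_isOpen_preimage.2 fun s => ?_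
    simpa only [preimage, mem_Iio, h.crossingTime_lt_iff] using isOpen_lt (hφ s) continuous_const

variable [OrderTopology T] [IsTopologicalAddGroup T] [OrderClosedTopology R]

/-- The decomposition of the phase space into the cross-section `f ⁻¹' {c}` and the time axis:
`x` is sent to the point and the time at which its trajectory crosses the level. -/
def trivialization : X ≃ₜ f ⁻¹' {c} × T where
  toFun x := (⟨φ (h.crossingTime x) x, h.map_crossingTime x⟩, h.crossingTime x)
  invFun p := φ (-p.2) p.1
  left_inv x := by simp only [← φ.map_add, neg_add_cancel, φ.map_zero_apply]
  right_inv p := by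
    have hp : h.crossingTime p.1.1 = 0 := by
      rw [crossingTime_eq_iff, φ.map_zero_apply]
      exact p.1.2
    have htime : h.crossingTime (φ (-p.2) p.1) = p.2 := by
      rw [crossingTime_flow, hp, zero_sub, neg_neg]
    refine Prod.ext (Subtype.ext ?_) htime
    simp only [htime, ← φ.map_add, add_neg_cancel, φ.map_zero_apply]
  continuous_toFun := by
    have := h.continuous_crossingTime
    fun_prop
  continuous_invFun := by fun_prop

/-- The projection whose fibres are the orbits of the flow restricted to times in the subgroup `Γ`;
it realises the orbit space as the product of the cross-section with `T ⧸ Γ`. -/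
def orbitProj (Γ : AddSubgroup T) : X → f ⁻¹' {c} × T ⧸ Γ :=
  Prod.map id (QuotientAddGroup.mk : T → T ⧸ Γ) ∘ h.trivialization

lemma isOpenQuotientMap_orbitProj (Γ : AddSubgroup T) : IsOpenQuotientMap (h.orbitProj Γ) :=
  (IsOpenQuotientMap.id.prodMap QuotientAddGroup.isOpenQuotientMap_mk).comp
    h.trivialization.isOpenQuotientMap

lemma orbitProj_eq_iff (Γ : AddSubgroup T) (x y : X) :
    h.orbitProj Γ x = h.orbitProj Γ y ↔ ∃ s ∈ Γ, φ s x = y := by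
  have hcoord : h.orbitProj Γ x = h.orbitProj Γ y ↔
      φ (h.crossingTime x) x = φ (h.crossingTime y) y ∧
        -h.crossingTime x + h.crossingTime y ∈ Γ := by
    rw [Prod.ext_iff, ← QuotientAddGroup.eq, ← Subtype.coe_inj]
    rfl
  rw [hcoord]
  constructor
  · rintro ⟨hpoint, htime⟩
    refine ⟨-(-h.crossingTime x + h.crossingTime y), Γ.neg_mem htime, ?_⟩
    rw [neg_add, neg_neg, add_comm, φ.map_add, hpoint, ← φ.map_add, neg_add_cancel,
      φ.map_zero_apply]
  · rintro ⟨s, hs, rfl⟩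
    rw [crossingTime_flow, ← φ.map_add, sub_add_cancel, neg_add_eq_sub, sub_sub_cancel_left]
    exact ⟨rfl, Γ.neg_mem hs⟩

end IsTransverseLevel

end CrossSection

section ExponentialDecay

variable {X : Type*} [TopologicalSpace X] {φ : Flow ℝ X} {f : X → ℝ} {c : ℝ}

lemma strictAnti_of_exp_decay (hpos : ∀ x, 0 < f x) (hc : 0 < c)
    (hdecay : ∀ s, 0 ≤ s → ∀ x, f (φ s x) ≤ Real.exp (-(c * s)) * f x) (x : X) :
    StrictAnti fun s => f (φ s x) := by
  intro a b hab
  have hlt : Real.exp (-(c * (b - a))) < 1 :=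
    Real.exp_lt_one_iff.2 (neg_neg_of_pos (mul_pos hc (sub_pos.2 hab)))
  calc f (φ b x) = f (φ (b - a) (φ a x)) := by rw [← φ.map_add, sub_add_cancel]
    _ ≤ Real.exp (-(c * (b - a))) * f (φ a x) := hdecay _ (sub_nonneg.2 hab.le) _
    _ < f (φ a x) := mul_lt_of_lt_one_left (hpos _) hlt

lemma exists_eq_of_exp_decay (hf : Continuous f) (hpos : ∀ x, 0 < f x) (hc : 0 < c)
    (hdecay : ∀ s, 0 ≤ s → ∀ x, f (φ s x) ≤ Real.exp (-(c * s)) * f x) {r : ℝ} (hr : 0 < r)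
    (x : X) : ∃ s, f (φ s x) = r := by
  have hexp (y : ℝ) {ε : ℝ} (hε : 0 < ε) : ∃ s, 0 ≤ s ∧ Real.exp (-(c * s)) * y < ε := by
    have hlim : Tendsto (fun s => Real.exp (-(c * s)) * y) atTop (𝓝 0) := by
      simpa using (Real.tendsto_exp_neg_atTop_nhds_zero.comp
        (tendsto_id.const_mul_atTop hc)).mul_const y
    exact ((eventually_ge_atTop 0).and (hlim.eventually_lt_const hε)).exists
  obtain ⟨s, hs, hsmall⟩ := hexp (f x) hr
  obtain ⟨u, hu, hlarge⟩ := hexp r (hpos x)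
  have hbefore : r ≤ f (φ (-u) x) := by
    refine (lt_of_mul_lt_mul_left (hlarge.trans_le ?_) (Real.exp_pos _).le).le
    simpa [← φ.map_add] using hdecay u hu (φ (-u) x)
  have hcont : Continuous fun s => f (φ s x) := by fun_prop
  exact mem_range_of_exists_le_of_exists_ge hcont ⟨s, (hdecay s hs x).trans hsmall.le⟩
    ⟨-u, hbefore⟩

lemma isTransverseLevel_of_exp_decay (hf : Continuous f) (hpos : ∀ x, 0 < f x) (hc : 0 < c)
    (hdecay : ∀ s, 0 ≤ s → ∀ x, f (φ s x) ≤ Real.exp (-(c * s)) * f x) {r : ℝ} (hr : 0 < r) :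
    IsTransverseLevel φ f r :=
  ⟨hf, strictAnti_of_exp_decay hpos hc hdecay, exists_eq_of_exp_decay hf hpos hc hdecay hr⟩

end ExponentialDecay

section DiagonalFlow

variable {ι : Type*} {E : ι → Type*}

section Module

variable [∀ i, TopologicalSpace (E i)] [∀ i, AddCommGroup (E i)] [∀ i, Module ℂ (E i)]
  [∀ i, ContinuousSMul ℂ (E i)]

variable (E) in
/-- The flow of the diagonal operators `diag (exp (s log αᵢ))`, which interpolates the powers of
`diag α`. -/
def diagonalFlow (α : ι → ℂ) : Flow ℝ (∀ i, E i) where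
  toFun s t i := Complex.exp (s * Complex.log (α i)) • t i
  cont' := by
    unfold Function.uncurry
    fun_prop
  map_add' s u t := by
    ext i
    simp only [Complex.ofReal_add, add_mul, Complex.exp_add, mul_smul]
  map_zero' t := by
    ext i
    simp only [Complex.ofReal_zero, zero_mul, Complex.exp_zero, one_smul]

lemma diagonalFlow_intCast {α : ι → ℂ} (hα : ∀ i, α i ≠ 0) (k : ℤ) (t : ∀ i, E i) :
    diagonalFlow E α k t = fun i => α i ^ k • t i := by
  ext i
  simp only [diagonalFlow, Complex.ofReal_intCast, Complex.exp_int_mul, Complex.exp_log (hα i)]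

lemma isInvariant_diagonalFlow_ne_zero (α : ι → ℂ) :
    IsInvariant (diagonalFlow E α) {t | t ≠ 0} := by
  intro s t ht
  obtain ⟨i, hi⟩ := Function.ne_iff.1 ht
  exact Function.ne_iff.2 ⟨i, smul_ne_zero (Complex.exp_ne_zero _) hi⟩

end Module

variable [Fintype ι] [∀ i, NormedAddCommGroup (E i)] {p : ℝ≥0∞} [Fact (1 ≤ p)]

lemma norm_le_norm_of_forall_norm_apply_le {x y : PiLp p E} (hxy : ∀ i, ‖x i‖ ≤ ‖y i‖) :
    ‖x‖ ≤ ‖y‖ := by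
  obtain rfl | hp := eq_or_ne p ∞
  · rw [← PiLp.norm_ofLp, ← PiLp.norm_ofLp]
    exact (pi_norm_le_iff_of_nonneg (norm_nonneg _)).2 fun i =>
      (hxy i).trans (norm_le_pi_norm y.ofLp i)
  · have hp0 : 0 < p.toReal := p.toReal_pos_iff_ne_top.2 hp
    simp only [PiLp.norm_eq_sum hp0]
    gcongr with i
    exact hxy i

variable [∀ i, NormedSpace ℂ (E i)]

lemma norm_toLp_diagonalFlow_le {α : ι → ℂ} {c : ℝ} (hc : ∀ i, Real.log ‖α i‖ ≤ -c) {s : ℝ}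
    (hs : 0 ≤ s) (t : ∀ i, E i) :
    ‖toLp p (diagonalFlow E α s t)‖ ≤ Real.exp (-(c * s)) * ‖toLp p t‖ := by
  have hcoord (i : ι) : ‖Complex.exp (s * Complex.log (α i))‖ ≤ Real.exp (-(c * s)) := by
    rw [Complex.norm_exp, Complex.re_ofReal_mul, Complex.log_re, Real.exp_le_exp, ← neg_mul,
      mul_comm]
    exact mul_le_mul_of_nonneg_right (hc i) hs
  have hscalar : ‖(Real.exp (-(c * s)) : ℂ)‖ = Real.exp (-(c * s)) :=
    Complex.norm_of_nonneg (Real.exp_pos _).le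
  calc ‖toLp p (diagonalFlow E α s t)‖ ≤ ‖(Real.exp (-(c * s)) : ℂ) • toLp p t‖ := by
        refine norm_le_norm_of_forall_norm_apply_le fun i => ?_
        rw [PiLp.smul_apply, norm_smul, hscalar]
        exact (norm_smul_le _ _).trans (mul_le_mul_of_nonneg_right (hcoord i) (norm_nonneg _))
    _ = Real.exp (-(c * s)) * ‖toLp p t‖ := by rw [norm_smul, hscalar]

variable (E p) in
/-- The identification of the `Lᵖ` norm level `r` in the punctured product `∏ i, E i \ 0`, which
carries the product topology, with the sphere of radius `r` in `PiLp p E`. -/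
def normLevelHomeomorphSphere {r : ℝ} (hr : r ≠ 0) :
    (fun t : {t : ∀ i, E i // t ≠ 0} => ‖toLp p t.1‖) ⁻¹' {r} ≃ₜ
      Metric.sphere (0 : PiLp p E) r where
  toFun t := ⟨toLp p t.1.1, mem_sphere_zero_iff_norm.2 t.2⟩
  invFun x := ⟨⟨ofLp x.1, (ofLp_eq_zero p).not.2 (ne_zero_of_mem_sphere hr x)⟩,
    mem_sphere_zero_iff_norm.1 x.2⟩
  left_inv _ := rfl
  right_inv _ := rfl
  continuous_toFun := by fun_prop
  continuous_invFun := by fun_prop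

lemma isTransverseLevel_diagonalFlow {α : ι → ℂ} (hα : ∀ i, 0 < ‖α i‖ ∧ ‖α i‖ < 1) {r : ℝ}
    (hr : 0 < r) :
    IsTransverseLevel ((diagonalFlow E α).restrict (isInvariant_diagonalFlow_ne_zero α))
      (fun t => ‖toLp p t.1‖) r := by
  obtain ⟨c, hc, hrate⟩ := Pi.exists_forall_pos_add_lt fun i => Real.log_neg (hα i).1 (hα i).2
  refine isTransverseLevel_of_exp_decay (by fun_prop) (fun t => ?_) hc (fun s hs t => ?_) hr
  · exact norm_pos_iff.2 ((toLp_eq_zero p).not.2 t.2)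
  · exact norm_toLp_diagonalFlow_le (fun i => (lt_neg_iff_add_neg.2 (hrate i)).le) hs t.1

end DiagonalFlow

theorem hopf_quotient_homeomorph_sphere_circle_general {ι : Type*} [Fintype ι] {E : ι → Type*}
    [∀ i, NormedAddCommGroup (E i)] [∀ i, NormedSpace ℂ (E i)] (p : ℝ≥0∞) [Fact (1 ≤ p)]
    (α : ι → ℂ) (hα : ∀ i, 0 < ‖α i‖ ∧ ‖α i‖ < 1) :
    Nonempty ((Quot (fun x y : {t : ∀ i, E i // t ≠ 0} =>
        ∃ k : ℤ, (fun i => α i ^ k • x.1 i) = y.1)) ≃ₜ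
      (Metric.sphere (0 : PiLp p E) 1 × AddCircle (1 : ℝ))) := by
  have hlevel := isTransverseLevel_diagonalFlow (E := E) (p := p) hα one_pos
  let Γ := AddSubgroup.zmultiples (1 : ℝ)
  have horbit (x y : {t : ∀ i, E i // t ≠ 0}) : hlevel.orbitProj Γ x = hlevel.orbitProj Γ y ↔
      ∃ k : ℤ, (fun i => α i ^ k • x.1 i) = y.1 := by
    have hα0 (i : ι) : α i ≠ 0 := norm_pos_iff.1 (hα i).1
    simp_rw [hlevel.orbitProj_eq_iff, Γ, AddSubgroup.exists_mem_zmultiples, zsmul_one,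
      ← diagonalFlow_intCast hα0]
    exact exists_congr fun k => Subtype.ext_iff
  obtain ⟨e⟩ := nonempty_quot_homeomorph_of_isQuotientMap
    (hlevel.isOpenQuotientMap_orbitProj Γ).isQuotientMap horbit
  exact ⟨e.trans ((normLevelHomeomorphSphere E p one_ne_zero).prodCongr (.refl _))⟩

end

/-- The diagonal Hopf manifold `(ℂⁿ \ 0)/⟨A⟩` is homeomorphic to
`S^{2n−1} × S¹`, where `S^{2n−1}` is the unit sphere of the Euclidean norm
on `ℂⁿ` and `S¹ = ℝ/ℤ`. -/
theorem hopf_quotient_homeomorph_sphere_circle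
    (n : ℕ) (hn : 1 ≤ n) (α : Fin n → ℂ)
    (hα : ∀ i, 0 < ‖α i‖ ∧ ‖α i‖ < 1) :
    Nonempty ((Quot (fun x y : {t : Fin n → ℂ // t ≠ 0} =>
        ∃ k : ℤ, (fun i => (α i) ^ k * x.1 i) = y.1)) ≃ₜ
      (Metric.sphere (0 : EuclideanSpace ℂ (Fin n)) 1 × AddCircle (1 : ℝ))) :=
  hopf_quotient_homeomorph_sphere_circle_general 2 α hα
end
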